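/- The shadow projection is 1-Lipschitz for the Wasserstein-1 distance in its first argument: if η, η' are measures of equal mass with η ≤_{c,+} ν and η' ≤_{c,+} ν, and additionally η' ≤_c η approximation structure as in the source, then W(S^ν(η), S^ν(η')) ≤ W(η, η'). -/

import Mathlib

open MeasureTheory

/-- Convex order on finite measures: `∫ φ dμ ≤ ∫ φ dν` for every convex `φ` for which
both integrals exist. -/
def ConvexOrder (μ ν : Measure ℝ) : Prop :=
  ∀ φ : ℝ → ℝ, ConvexOn ℝ Set.univ φ → Integrable φ μ → Integrable φ ν →
    ∫ x, φ x ∂μ ≤ ∫ x, φ x ∂ν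

/-- `μ ≤_{c,+} ν`: there exists `η` with `μ ≤_c η` and `η ≤ ν` setwise. -/
def ConvexPlusOrder (μ ν : Measure ℝ) : Prop :=
  ∃ η : Measure ℝ, ConvexOrder μ η ∧ η ≤ ν

/-- `η` is the shadow of `μ` in `ν`: the `≤_c`-smallest measure `η` with `μ ≤_c η`
and `η ≤ ν`. -/
def IsShadow (μ ν η : Measure ℝ) : Prop :=
  ConvexOrder μ η ∧ η ≤ ν ∧
    ∀ η' : Measure ℝ, ConvexOrder μ η' → η' ≤ ν → ConvexOrder η η'

/-- Wasserstein-1 distance in its dual (Kantorovich–Rubinstein) formulation. -/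
noncomputable def W1 (μ ν : Measure ℝ) : ℝ :=
  ⨆ f : {f : ℝ → ℝ // LipschitzWith 1 f},
    |∫ x, (f : ℝ → ℝ) x ∂μ - ∫ x, (f : ℝ → ℝ) x ∂ν|

section ShadowAux
open Set Filter Topology
namespace ShadowAux

/-- Right derivative. -/
noncomputable def rd (φ : ℝ → ℝ) (x : ℝ) : ℝ := derivWithin φ (Ioi x) x

lemma rd_has {φ : ℝ → ℝ} (h : ConvexOn ℝ univ φ) (x : ℝ) :
    HasDerivWithinAt φ (rd φ x) (Ioi x) x :=
  h.hasDerivWithinAt_rightDeriv_of_mem_interior (by simp)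

lemma rd_eq {φ : ℝ → ℝ} {x d : ℝ} (h : HasDerivWithinAt φ d (Ioi x) x) : rd φ x = d :=
  h.derivWithin (uniqueDiffWithinAt_Ioi x)

lemma rd_mono {φ : ℝ → ℝ} (h : ConvexOn ℝ univ φ) : Monotone (rd φ) := by
  intro x y hxy
  exact h.monotoneOn_rightDeriv (by simp) (by simp) hxy

lemma cvx_cont {φ : ℝ → ℝ} (h : ConvexOn ℝ univ φ) : Continuous φ :=
  continuousOn_univ.mp (h.continuousOn isOpen_univ)

lemma rd_ftc {φ : ℝ → ℝ} (h : ConvexOn ℝ univ φ) (a b : ℝ) :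
    ∫ t in a..b, rd φ t = φ b - φ a :=
  intervalIntegral.integral_eq_sub_of_hasDeriv_right (cvx_cont h).continuousOn
    (fun x _ => rd_has h x) (rd_mono h).intervalIntegrable

lemma rd_le_slope {φ : ℝ → ℝ} (h : ConvexOn ℝ univ φ) {x y : ℝ} (hxy : x < y) :
    rd φ x ≤ (φ y - φ x) / (y - x) := by
  have := h.rightDeriv_le_slope_of_mem_interior (x := x) (y := y) (by simp) (by simp) hxy
  rwa [slope_def_field] at this

/-- Stieltjes function of a convex function. -/
noncomputable def st {φ : ℝ → ℝ} (h : ConvexOn ℝ univ φ) : StieltjesFunction ℝ where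
  toFun := rd φ
  mono' := rd_mono h
  right_continuous' := by
    intro x
    have hm := rd_mono h
    rw [Metric.continuousWithinAt_iff]
    intro ε hε
    have h1 := (hasDerivWithinAt_iff_tendsto_slope' self_notMem_Ioi).mp (rd_has h x)
    have h2 : ∀ᶠ y in 𝓝[>] x, slope φ x y < rd φ x + ε :=
      h1.eventually (gt_mem_nhds (by linarith))
    obtain ⟨y, hy, hxy⟩ := (h2.and self_mem_nhdsWithin).exists
    have hxy : x < y := hxy
    rw [slope_def_field] at hy
    have hc : ContinuousAt (fun z => (φ y - φ z) / (y - z)) x := by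
      have := (cvx_cont h).continuousAt (x := x)
      refine ContinuousAt.div (by fun_prop) (by fun_prop) (by linarith)
    have h3 : ∀ᶠ z in 𝓝 x, (φ y - φ z) / (y - z) < rd φ x + ε ∧ z < y :=
      (hc.eventually (gt_mem_nhds hy)).and (gt_mem_nhds hxy)
    obtain ⟨δ, hδ, hz⟩ := Metric.eventually_nhds_iff.mp h3
    refine ⟨δ, hδ, fun z hzx hd => ?_⟩
    obtain ⟨a, b⟩ := hz hd
    have := rd_le_slope h b
    have := hm (show x ≤ z from hzx)
    rw [Real.dist_eq, abs_lt]
    constructor <;> linarith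

lemma st_apply {φ : ℝ → ℝ} (h : ConvexOn ℝ univ φ) (x : ℝ) : st h x = rd φ x := rfl

/-! ### Convex envelope -/

/-- Convex envelope. -/
noncomputable def env (f : ℝ → ℝ) (x : ℝ) : ℝ :=
  sInf {t | (x, t) ∈ convexHull ℝ {p : ℝ × ℝ | f p.1 ≤ p.2}}

lemma hull_lb {f ψ : ℝ → ℝ} (hψ : ConvexOn ℝ univ ψ) (hle : ∀ x, ψ x ≤ f x) {x t : ℝ}
    (h : (x, t) ∈ convexHull ℝ {p : ℝ × ℝ | f p.1 ≤ p.2}) : ψ x ≤ t := by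
  have h1 : convexHull ℝ {p : ℝ × ℝ | f p.1 ≤ p.2} ⊆ {p : ℝ × ℝ | p.1 ∈ univ ∧ ψ p.1 ≤ p.2} := by
    apply convexHull_min
    · intro p hp
      exact ⟨mem_univ _, (hle _).trans hp⟩
    · exact hψ.convex_epigraph
  exact (h1 h).2

lemma hull_self (f : ℝ → ℝ) (x : ℝ) : (x, f x) ∈ convexHull ℝ {p : ℝ × ℝ | f p.1 ≤ p.2} :=
  subset_convexHull _ _ (by simp)

lemma le_env {f ψ : ℝ → ℝ} (hψ : ConvexOn ℝ univ ψ) (hle : ∀ x, ψ x ≤ f x) (x : ℝ) :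
    ψ x ≤ env f x :=
  le_csInf ⟨_, hull_self f x⟩ fun _ ht => hull_lb hψ hle ht

lemma cvx_zero : ConvexOn ℝ univ (fun _ : ℝ => (0:ℝ)) := convexOn_const _ convex_univ

lemma env_le_of_mem {f : ℝ → ℝ} (hf : ∀ x, 0 ≤ f x) {x t : ℝ}
    (h : (x, t) ∈ convexHull ℝ {p : ℝ × ℝ | f p.1 ≤ p.2}) : env f x ≤ t :=
  csInf_le ⟨0, fun _ ht => hull_lb cvx_zero hf ht⟩ h

lemma env_le {f : ℝ → ℝ} (hf : ∀ x, 0 ≤ f x) (x : ℝ) : env f x ≤ f x :=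
  env_le_of_mem hf (hull_self f x)

lemma exists_mem_hull (f : ℝ → ℝ) (x : ℝ) {ε : ℝ} (hε : 0 < ε) :
    ∃ t, (x, t) ∈ convexHull ℝ {p : ℝ × ℝ | f p.1 ≤ p.2} ∧ t < env f x + ε := by
  obtain ⟨t, ht, h⟩ := exists_lt_of_csInf_lt (s := {t | (x, t) ∈ convexHull ℝ {p : ℝ × ℝ | f p.1 ≤ p.2}})
    ⟨_, hull_self f x⟩ (lt_add_of_pos_right (env f x) hε)
  exact ⟨t, ht, h⟩

lemma env_convex {f : ℝ → ℝ} (hf : ∀ x, 0 ≤ f x) : ConvexOn ℝ univ (env f) := by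
  refine ⟨convex_univ, fun x _ y _ a b ha hb hab => ?_⟩
  apply le_of_forall_pos_le_add
  intro ε hε
  obtain ⟨t, ht, ht'⟩ := exists_mem_hull f x hε
  obtain ⟨s, hs, hs'⟩ := exists_mem_hull f y hε
  have := env_le_of_mem hf (convex_convexHull ℝ _ ht hs ha hb hab)
  simp only [smul_eq_mul] at this ⊢
  calc _ ≤ _ := this
    _ = a * t + b * s := rfl
    _ ≤ a * (env f x + ε) + b * (env f y + ε) := by gcongr
    _ = a * env f x + b * env f y + (a + b) * ε := by ring
    _ = _ := by rw [hab, one_mul]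

lemma env_swap {f h : ℝ → ℝ} (hf : ∀ x, 0 ≤ f x) (hh : ∀ x, 0 ≤ h x)
    (hm : Monotone (fun x => h x - f x)) : Monotone (fun x => env h x - env f x) := by
  intro x y hxy
  rcases hxy.eq_or_lt with rfl | hxy
  · exact le_rfl
  suffices H : env f y + env h x ≤ env h y + env f x by simp only; linarith
  apply le_of_forall_pos_le_add
  intro ε hε
  obtain ⟨t, ht, ht'⟩ := exists_mem_hull h y (half_pos hε)
  obtain ⟨s, hs, hs'⟩ := exists_mem_hull f x (half_pos hε)
  suffices H : env f y + env h x ≤ t + s by linarith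
  obtain ⟨ι, _, w, z, hw0, hw1, hz, hws⟩ := mem_convexHull_iff_exists_fintype.mp ht
  obtain ⟨κ, _, q, r, hq0, hq1, hr, hqs⟩ := mem_convexHull_iff_exists_fintype.mp hs
  have ey : ∑ i, w i * (z i).1 = y := by simpa [Prod.fst_sum] using congrArg Prod.fst hws
  have et : ∑ i, w i * (z i).2 = t := by simpa [Prod.snd_sum] using congrArg Prod.snd hws
  have ex : ∑ i, q i * (r i).1 = x := by simpa [Prod.fst_sum] using congrArg Prod.fst hqs
  have es : ∑ i, q i * (r i).2 = s := by simpa [Prod.snd_sum] using congrArg Prod.snd hqs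
  have sumL : ∀ g : ι → ℝ, ∑ p : ι × κ, w p.1 * q p.2 * g p.1 = ∑ i, w i * g i := by
    intro g
    rw [Fintype.sum_prod_type]
    refine Finset.sum_congr rfl fun i _ => ?_
    simp only
    rw [← Finset.sum_mul, ← Finset.mul_sum, hq1, mul_one]
  have sumR : ∀ g : κ → ℝ, ∑ p : ι × κ, w p.1 * q p.2 * g p.2 = ∑ i, q i * g i := by
    intro g
    rw [Fintype.sum_prod_type_right]
    refine Finset.sum_congr rfl fun i _ => ?_
    simp only
    rw [← Finset.sum_mul, ← Finset.sum_mul, hw1, one_mul]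
  have sum1 : ∑ p : ι × κ, w p.1 * q p.2 = 1 := by
    have := sumL (fun _ => 1)
    simpa [hw1] using this
  have w0 : ∀ p : ι × κ, 0 ≤ w p.1 * q p.2 := fun p => mul_nonneg (hw0 _) (hq0 _)
  set E := ∑ p : ι × κ, w p.1 * q p.2 * max ((z p.1).1 - (r p.2).1) 0 with hE
  have hEge : y - x ≤ E := by
    rw [← ey, ← ex, ← sumL, ← sumR, ← Finset.sum_sub_distrib, hE]
    refine Finset.sum_le_sum fun p _ => ?_
    rw [← mul_sub]
    exact mul_le_mul_of_nonneg_left (le_max_left _ _) (w0 p)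
  have hEpos : 0 < E := by linarith
  set l := (y - x) / E with hl
  have hl0 : 0 ≤ l := div_nonneg (by linarith) hEpos.le
  have hl1 : l ≤ 1 := (div_le_one hEpos).mpr hEge
  have hlE : l * E = y - x := div_mul_cancel₀ _ hEpos.ne'
  let m : ι × κ → ℝ := fun p => if (r p.2).1 < (z p.1).1 then l else 0
  have m0 : ∀ p, 0 ≤ m p := by intro p; simp only [m]; split_ifs <;> linarith
  have m1 : ∀ p, m p ≤ 1 := by intro p; simp only [m]; split_ifs <;> linarith
  have mm : ∀ p, m p * ((z p.1).1 - (r p.2).1) = l * max ((z p.1).1 - (r p.2).1) 0 := by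
    intro p; simp only [m]; split_ifs with hc
    · rw [max_eq_left (by linarith)]
    · rw [max_eq_right (by linarith)]; simp
  have msum : ∑ p : ι × κ, w p.1 * q p.2 * (m p * ((z p.1).1 - (r p.2).1)) = y - x := by
    rw [← hlE, hE, Finset.mul_sum]
    refine Finset.sum_congr rfl fun p _ => ?_
    rw [mm]; ring
  have key : ∀ {g : ℝ → ℝ} (_ : ConvexOn ℝ univ g) (c : ι × κ → ℝ),
      g (∑ p, w p.1 * q p.2 * c p) ≤ ∑ p, w p.1 * q p.2 * g (c p) := by
    intro g hg c
    have := hg.map_sum_le (t := Finset.univ) (w := fun p : ι × κ => w p.1 * q p.2) (p := c)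
      (fun p _ => w0 p) sum1 (fun _ _ => mem_univ _)
    simpa using this
  have cv : ∀ {g : ℝ → ℝ} (_ : ConvexOn ℝ univ g) (a b c : ℝ), 0 ≤ c → c ≤ 1 →
      g ((1 - c) * a + c * b) ≤ (1 - c) * g a + c * g b := by
    intro g hg a b c h0 h1
    have := hg.2 (mem_univ a) (mem_univ b) (sub_nonneg.mpr h1) h0 (by ring)
    simpa using this
  have A : env h x ≤ ∑ p : ι × κ, w p.1 * q p.2 *
      ((1 - m p) * h (z p.1).1 + m p * h (r p.2).1) := by
    have e : x = ∑ p : ι × κ, w p.1 * q p.2 * ((1 - m p) * (z p.1).1 + m p * (r p.2).1) := by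
      have : y - (y - x) = x := by ring
      rw [← this]
      nth_rewrite 1 [← ey]
      rw [← msum, ← sumL, ← Finset.sum_sub_distrib]
      refine Finset.sum_congr rfl fun p _ => ?_
      ring
    nth_rewrite 1 [e]
    refine (key (env_convex hh) _).trans (Finset.sum_le_sum fun p _ => ?_)
    refine mul_le_mul_of_nonneg_left ((cv (env_convex hh) _ _ _ (m0 p) (m1 p)).trans ?_) (w0 p)
    have := m0 p
    have := sub_nonneg.mpr (m1 p)
    gcongr <;> exact env_le hh _
  have B : env f y ≤ ∑ p : ι × κ, w p.1 * q p.2 *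
      ((1 - m p) * f (r p.2).1 + m p * f (z p.1).1) := by
    have e : y = ∑ p : ι × κ, w p.1 * q p.2 * ((1 - m p) * (r p.2).1 + m p * (z p.1).1) := by
      have : x + (y - x) = y := by ring
      rw [← this]
      nth_rewrite 1 [← ex]
      rw [← msum, ← sumR, ← Finset.sum_add_distrib]
      refine Finset.sum_congr rfl fun p _ => ?_
      ring
    nth_rewrite 1 [e]
    refine (key (env_convex hf) _).trans (Finset.sum_le_sum fun p _ => ?_)
    refine mul_le_mul_of_nonneg_left ((cv (env_convex hf) _ _ _ (m0 p) (m1 p)).trans ?_) (w0 p)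
    have := m0 p
    have := sub_nonneg.mpr (m1 p)
    gcongr <;> exact env_le hf _
  calc env f y + env h x ≤ _ := add_le_add B A
    _ ≤ ∑ p : ι × κ, (w p.1 * q p.2 * (z p.1).2 + w p.1 * q p.2 * (r p.2).2) := by
        rw [← Finset.sum_add_distrib]
        refine Finset.sum_le_sum fun p _ => ?_
        rw [← mul_add, ← mul_add]
        refine mul_le_mul_of_nonneg_left ?_ (w0 p)
        have h1 : h (z p.1).1 ≤ (z p.1).2 := hz p.1
        have h2 : f (r p.2).1 ≤ (r p.2).2 := hr p.2
        have h3 : m p * ((h (r p.2).1 - f (r p.2).1) - (h (z p.1).1 - f (z p.1).1)) ≤ 0 := by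
          simp only [m]; split_ifs with hc
          · have := hm hc.le
            simp only at this
            nlinarith
          · simp
        nlinarith
    _ = t + s := by
        rw [Finset.sum_add_distrib, sumL (fun i => (z i).2), sumR (fun i => (r i).2), et, es]

lemma env_mid {f : ℝ → ℝ} (hf : ∀ x, 0 ≤ f x) (hfc : Continuous f) {c : ℝ} (hc : env f c < f c) :
    ∃ δ₀ > 0, ∀ δ, 0 < δ → δ < δ₀ → env f (c - δ) + env f (c + δ) ≤ 2 * env f c := by
  set v := env f with hv
  have hvc := env_convex hf
  have h1 : ∀ᶠ t in 𝓝 c, (v c + f c) / 2 < f t ∧ v t < (v c + f c) / 2 :=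
    ((hfc.tendsto c).eventually (lt_mem_nhds (by linarith))).and
      (((cvx_cont hvc).tendsto c).eventually (gt_mem_nhds (by linarith)))
  obtain ⟨δ₀, h0, hδ⟩ := Metric.eventually_nhds_iff.mp h1
  refine ⟨δ₀, h0, fun δ hδ0 hδ1 => ?_⟩
  set p := v (c - δ) with hp
  set q := v (c + δ) with hq
  let L : ℝ → ℝ := fun t => (p + q) / 2 + (t - c) * ((q - p) / (2 * δ))
  have hLc : ConvexOn ℝ univ L := by
    refine ⟨convex_univ, fun x _ y _ a b ha hb hab => le_of_eq ?_⟩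
    simp only [L, smul_eq_mul]
    have : a = 1 - b := by linarith
    subst this; ring
  have hLp : L (c - δ) = p := by simp only [L]; field_simp; ring
  have hLq : L (c + δ) = q := by simp only [L]; field_simp; ring
  have pm : p < (v c + f c) / 2 := (hδ (y := c - δ) (by simp [abs_of_pos hδ0, hδ1])).2
  have qm : q < (v c + f c) / 2 := (hδ (y := c + δ) (by simp [abs_of_pos hδ0, hδ1])).2
  have key : ∀ t, L t ≤ f t := by
    intro t
    have cv := hvc.2
    rcases lt_or_ge t (c - δ) with h | h
    · -- c - δ between t and c + δ
      refine le_trans ?_ (env_le hf t)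
      have e1 : 0 < c + δ - t := by linarith
      have := cv (mem_univ t) (mem_univ (c + δ)) (a := 2 * δ / (c + δ - t)) (b := (c - δ - t) / (c + δ - t))
        (by positivity) (div_nonneg (by linarith) e1.le) (by field_simp; ring)
      simp only [smul_eq_mul] at this
      have e2 : 2 * δ / (c + δ - t) * t + (c - δ - t) / (c + δ - t) * (c + δ) = c - δ := by
        field_simp; ring
      rw [e2] at this
      change p ≤ 2 * δ / (c + δ - t) * v t + (c - δ - t) / (c + δ - t) * q at this
      have e3 : p * (c + δ - t) ≤ 2 * δ * v t + (c - δ - t) * q := by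
        have := mul_le_mul_of_nonneg_right this e1.le
        field_simp at this
        linarith
      change L t ≤ v t
      have e4 : 2 * δ * L t = p * (c + δ - t) - (c - δ - t) * q := by
        simp only [L]; field_simp; ring
      have : 2 * δ * L t ≤ 2 * δ * v t := by linarith
      exact le_of_mul_le_mul_left this (by positivity)
    rcases lt_or_ge (c + δ) t with h' | h'
    · refine le_trans ?_ (env_le hf t)
      have e1 : 0 < t - (c - δ) := by linarith
      have := cv (mem_univ t) (mem_univ (c - δ)) (a := 2 * δ / (t - (c - δ))) (b := (t - (c + δ)) / (t - (c - δ)))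
        (by positivity) (div_nonneg (by linarith) e1.le) (by field_simp; ring)
      simp only [smul_eq_mul] at this
      have e2 : 2 * δ / (t - (c - δ)) * t + (t - (c + δ)) / (t - (c - δ)) * (c - δ) = c + δ := by
        field_simp; ring
      rw [e2] at this
      change q ≤ 2 * δ / (t - (c - δ)) * v t + (t - (c + δ)) / (t - (c - δ)) * p at this
      have e3 : q * (t - (c - δ)) ≤ 2 * δ * v t + (t - (c + δ)) * p := by
        have := mul_le_mul_of_nonneg_right this e1.le
        field_simp at this
        linarith
      change L t ≤ v t
      have e4 : 2 * δ * L t = q * (t - (c - δ)) - (t - (c + δ)) * p := by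
        simp only [L]; field_simp; ring
      have : 2 * δ * L t ≤ 2 * δ * v t := by linarith
      exact le_of_mul_le_mul_left this (by positivity)
    · have hft : (v c + f c) / 2 < f t := (hδ (y := t) (by
        rw [Real.dist_eq, abs_lt]; constructor <;> linarith)).1
      refine le_trans ?_ hft.le
      have e4 : 2 * δ * L t = p * (c + δ - t) + (t - (c - δ)) * q := by
        simp only [L]; field_simp; ring
      have : 2 * δ * L t ≤ 2 * δ * ((v c + f c) / 2) := by
        rw [e4]
        nlinarith
      exact le_of_mul_le_mul_left this (by positivity)
  have h3 := le_env hLc key c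
  have h4 : L c = (p + q) / 2 := by simp [L]
  rw [h4] at h3
  linarith

lemma sub_env_convex {G p : ℝ → ℝ} (hG : ConvexOn ℝ univ G) (hp : ConvexOn ℝ univ p)
    (hle : ∀ x, p x ≤ G x) : ConvexOn ℝ univ (fun x => G x - env (fun x => G x - p x) x) := by
  set f : ℝ → ℝ := fun x => G x - p x with hfdef
  have hf : ∀ x, 0 ≤ f x := fun x => sub_nonneg.mpr (hle x)
  have hfc : Continuous f := (cvx_cont hG).sub (cvx_cont hp)
  have hvc := env_convex hf
  have hvcont := cvx_cont hvc
  set v := env f with hv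
  refine LinearOrder.convexOn_of_lt convex_univ ?_
  intro x _ y _ hxy a b ha hb hab
  simp only [smul_eq_mul]
  by_contra hcon
  push Not at hcon
  set z := a * x + b * y with hz
  let w : ℝ → ℝ := fun t => G t - v t
  set k := (w y - w x) / (y - x) with hk
  have hyx : 0 < y - x := by linarith
  have hkk : k * (y - x) = w y - w x := div_mul_cancel₀ _ hyx.ne'
  let l : ℝ → ℝ := fun t => w x + (t - x) * k
  let ψ : ℝ → ℝ := fun t => w t - l t
  have lx : l x = w x := by simp [l]
  have ly : l y = w y := by simp only [l]; linarith
  have hψc : Continuous ψ := by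
    have := cvx_cont hG
    simp only [ψ, w, l]; fun_prop
  have ψx : ψ x = 0 := by simp [ψ, lx]
  have ψy : ψ y = 0 := by simp [ψ, ly]
  have hzx : x < z := by
    have e : z - x = b * (y - x) := by rw [hz]; linear_combination x * hab
    have := mul_pos hb hyx
    linarith
  have hzy : z < y := by
    have e : y - z = a * (y - x) := by rw [hz]; linear_combination -y * hab
    have := mul_pos ha hyx
    linarith
  have ψz : 0 < ψ z := by
    have : l z = a * w x + b * w y := by
      have ha' : a = 1 - b := by linarith
      simp only [l, hz, ha']
      linear_combination b * hkk
    simp only [ψ, this]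
    simp only [w]
    linarith
  obtain ⟨c₁, hc₁, hmax⟩ := isCompact_Icc.exists_isMaxOn (nonempty_Icc.mpr hxy.le) hψc.continuousOn
  set M := ψ c₁ with hM
  have hmax' : ∀ t ∈ Icc x y, ψ t ≤ M := fun t ht => hmax ht
  have hMpos : 0 < M := ψz.trans_le (hmax' z ⟨hzx.le, hzy.le⟩)
  have hcomp : IsCompact (Icc x y ∩ ψ ⁻¹' {M}) :=
    isCompact_Icc.inter_right (isClosed_singleton.preimage hψc)
  obtain ⟨c, ⟨hcI, hcM⟩, hleast⟩ := hcomp.exists_isLeast ⟨c₁, hc₁, rfl⟩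
  have hcM : ψ c = M := hcM
  have hcx : x < c := lt_of_le_of_ne hcI.1 (by rintro rfl; linarith)
  have hcy : c < y := lt_of_le_of_ne hcI.2 (by rintro rfl; linarith)
  rcases (env_le hf c).lt_or_eq with hlt | heq
  · obtain ⟨δ₀, h0, hδ⟩ := env_mid hf hfc hlt
    obtain ⟨δ, hδ0, hδ1⟩ := exists_between (show 0 < min δ₀ (min (c - x) (y - c)) by
      simp only [lt_min_iff]; exact ⟨h0, by linarith, by linarith⟩)
    simp only [lt_min_iff] at hδ1
    have h1 := hδ δ hδ0 hδ1.1
    have h2 : G c ≤ (G (c - δ) + G (c + δ)) / 2 := by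
      have cv := hG.2
      have := cv (mem_univ (c - δ)) (mem_univ (c + δ)) (a := 1 / 2) (b := 1 / 2) (by norm_num)
        (by norm_num) (by norm_num)
      simp only [smul_eq_mul] at this
      have e : 1 / 2 * (c - δ) + 1 / 2 * (c + δ) = c := by ring
      rw [e] at this
      linarith
    have h3 : ψ (c + δ) ≤ M := hmax' _ ⟨by linarith, by linarith⟩
    have h4 : ψ (c - δ) < M := by
      refine lt_of_le_of_ne (hmax' _ ⟨by linarith, by linarith⟩) fun he => ?_
      have := hleast (a := c - δ) ⟨⟨by linarith, by linarith⟩, he⟩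
      linarith
    have h5 : 2 * l c = l (c - δ) + l (c + δ) := by simp only [l]; ring
    simp only [ψ, w] at h3 h4 hcM
    change v (c - δ) + v (c + δ) ≤ 2 * v c at h1
    linarith
  · have e1 : w c = p c := by
      simp only [w]
      change v c = G c - p c at heq
      linarith
    have hpw : ∀ t, p t ≤ w t := by
      intro t
      have : v t ≤ G t - p t := env_le hf t
      simp only [w]; linarith
    have cv := hp.2
    have := cv (mem_univ x) (mem_univ y) (a := (y - c) / (y - x)) (b := (c - x) / (y - x))
      (div_nonneg (by linarith) hyx.le) (div_nonneg (by linarith) hyx.le) (by field_simp; ring)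
    simp only [smul_eq_mul] at this
    have e2 : (y - c) / (y - x) * x + (c - x) / (y - x) * y = c := by field_simp; ring
    rw [e2, ← e1] at this
    have e3 : w c ≤ (y - c) / (y - x) * w x + (c - x) / (y - x) * w y := by
      refine this.trans ?_
      have : 0 ≤ (y - c) / (y - x) := div_nonneg (by linarith) hyx.le
      have : 0 ≤ (c - x) / (y - x) := div_nonneg (by linarith) hyx.le
      gcongr <;> exact hpw _
    have e4 : (y - c) / (y - x) * w x + (c - x) / (y - x) * w y = l c := by
      simp only [l, hk]; field_simp; ring
    have : ψ c ≤ 0 := by simp only [ψ]; linarith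
    linarith

/-! ### Potentials -/

/-- Put potential. -/
noncomputable def pot (μ : Measure ℝ) (k : ℝ) : ℝ := ∫ x, max (k - x) 0 ∂μ

lemma pot_int {μ : Measure ℝ} [IsFiniteMeasure μ] (hμ : Integrable (fun x : ℝ => x) μ) (k : ℝ) :
    Integrable (fun x => max (k - x) 0) μ :=
  ((integrable_const k).sub hμ).pos_part

lemma call_int {μ : Measure ℝ} [IsFiniteMeasure μ] (hμ : Integrable (fun x : ℝ => x) μ) (k : ℝ) :
    Integrable (fun x => max (x - k) 0) μ :=
  (hμ.sub (integrable_const k)).pos_part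

lemma pot_nonneg (μ : Measure ℝ) (k : ℝ) : 0 ≤ pot μ k :=
  integral_nonneg fun _ => le_max_right _ _

lemma put_convex (x : ℝ) : ConvexOn ℝ univ (fun k : ℝ => max (k - x) 0) := by
  refine ConvexOn.sup ?_ cvx_zero
  exact (convexOn_id convex_univ).sub (concaveOn_const _ convex_univ)

lemma put_convex' (k : ℝ) : ConvexOn ℝ univ (fun x : ℝ => max (k - x) 0) := by
  refine ConvexOn.sup ?_ cvx_zero
  exact (convexOn_const _ convex_univ).sub (concaveOn_id convex_univ)

lemma pot_convex {μ : Measure ℝ} [IsFiniteMeasure μ] (hμ : Integrable (fun x : ℝ => x) μ) :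
    ConvexOn ℝ univ (pot μ) := by
  refine ⟨convex_univ, fun x _ y _ a b ha hb hab => ?_⟩
  simp only [pot, smul_eq_mul]
  rw [← integral_const_mul, ← integral_const_mul,
    ← integral_add ((pot_int hμ _).const_mul _) ((pot_int hμ _).const_mul _)]
  refine integral_mono (pot_int hμ _)
    (((pot_int hμ _).const_mul _).add ((pot_int hμ _).const_mul _)) fun t => ?_
  exact (put_convex t).2 (mem_univ x) (mem_univ y) ha hb hab

lemma pot_add {μ κ : Measure ℝ} [IsFiniteMeasure μ] [IsFiniteMeasure κ]
    (hμ : Integrable (fun x : ℝ => x) μ) (hκ : Integrable (fun x : ℝ => x) κ) (k : ℝ) :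
    pot (μ + κ) k = pot μ k + pot κ k :=
  integral_add_measure (pot_int hμ k) (pot_int hκ k)

lemma pot_has {μ : Measure ℝ} [IsFiniteMeasure μ] (hμ : Integrable (fun x : ℝ => x) μ) (k : ℝ) :
    HasDerivWithinAt (pot μ) (μ.real (Iic k)) (Ioi k) k := by
  rw [hasDerivWithinAt_iff_tendsto_slope' self_notMem_Ioi]
  have e1 : μ.real (Iic k) = ∫ x, (Iic k).indicator (fun _ => (1:ℝ)) x ∂μ := by
    rw [integral_indicator measurableSet_Iic]; simp
  have e2 : slope (pot μ) k = fun y => ∫ x, (max (y - x) 0 - max (k - x) 0) / (y - k) ∂μ := by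
    funext y
    rw [slope_def_field, integral_div, integral_sub (pot_int hμ y) (pot_int hμ k)]
    rfl
  rw [e1, e2]
  refine tendsto_integral_filter_of_dominated_convergence (fun _ => 1) ?_ ?_ (integrable_const _) ?_
  · refine Eventually.of_forall fun y => ?_
    exact (((pot_int hμ y).sub (pot_int hμ k)).div_const _).aestronglyMeasurable
  · filter_upwards [self_mem_nhdsWithin] with y hy
    have hy : k < y := hy
    refine Eventually.of_forall fun x => ?_
    rw [Real.norm_eq_abs, abs_div, abs_of_pos (sub_pos.mpr hy), div_le_one (sub_pos.mpr hy)]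
    refine (abs_max_sub_max_le_abs _ _ _).trans ?_
    rw [show y - x - (k - x) = y - k by ring, abs_of_pos (sub_pos.mpr hy)]
  · refine Eventually.of_forall fun x => ?_
    rcases le_or_gt x k with h | h
    · have : (Iic k).indicator (fun _ => (1:ℝ)) x = 1 := by simp [h]
      rw [this]
      refine tendsto_const_nhds.congr' ?_
      filter_upwards [self_mem_nhdsWithin] with y hy
      have hy : k < y := hy
      rw [max_eq_left (by linarith), max_eq_left (by linarith), eq_comm, div_eq_one_iff_eq (by linarith)]
      ring
    · have : (Iic k).indicator (fun _ => (1:ℝ)) x = 0 := by simp [h]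
      rw [this]
      refine tendsto_const_nhds.congr' ?_
      filter_upwards [Ioo_mem_nhdsGT h] with y hy
      rw [max_eq_right (by linarith [hy.2]), max_eq_right (by linarith)]
      simp

lemma pot_rd {μ : Measure ℝ} [IsFiniteMeasure μ] (hμ : Integrable (fun x : ℝ => x) μ) (k : ℝ) :
    rd (pot μ) k = μ.real (Iic k) := rd_eq (pot_has hμ k)

lemma pot_bot {μ : Measure ℝ} [IsFiniteMeasure μ] (hμ : Integrable (fun x : ℝ => x) μ) :
    Tendsto (pot μ) atBot (𝓝 0) := by
  have : (0:ℝ) = ∫ x, 0 ∂μ := by simp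
  rw [this]
  refine tendsto_integral_filter_of_dominated_convergence (fun x => max (0 - x) 0) ?_ ?_ (pot_int hμ 0) ?_
  · exact Eventually.of_forall fun y => (pot_int hμ y).aestronglyMeasurable
  · filter_upwards [eventually_le_atBot 0] with y hy
    refine Eventually.of_forall fun x => ?_
    rw [Real.norm_eq_abs, abs_of_nonneg (le_max_right _ _)]
    gcongr
  · refine Eventually.of_forall fun x => ?_
    refine tendsto_const_nhds.congr' ?_
    filter_upwards [eventually_le_atBot x] with y hy
    rw [max_eq_right (by linarith)]

/-- Call potential. -/
noncomputable def call (μ : Measure ℝ) (k : ℝ) : ℝ := ∫ x, max (x - k) 0 ∂μ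

lemma call_top {μ : Measure ℝ} [IsFiniteMeasure μ] (hμ : Integrable (fun x : ℝ => x) μ) :
    Tendsto (call μ) atTop (𝓝 0) := by
  have : (0:ℝ) = ∫ x, 0 ∂μ := by simp
  rw [this]
  refine tendsto_integral_filter_of_dominated_convergence (fun x => max (x - 0) 0) ?_ ?_ (call_int hμ 0) ?_
  · exact Eventually.of_forall fun y => (call_int hμ y).aestronglyMeasurable
  · filter_upwards [eventually_ge_atTop 0] with y hy
    refine Eventually.of_forall fun x => ?_
    rw [Real.norm_eq_abs, abs_of_nonneg (le_max_right _ _)]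
    gcongr
  · refine Eventually.of_forall fun x => ?_
    refine tendsto_const_nhds.congr' ?_
    filter_upwards [eventually_ge_atTop x] with y hy
    rw [max_eq_right (by linarith)]

lemma pot_call {μ : Measure ℝ} [IsFiniteMeasure μ] (hμ : Integrable (fun x : ℝ => x) μ) (k : ℝ) :
    pot μ k - call μ k = k * μ.real univ - ∫ x, x ∂μ := by
  rw [pot, call, ← integral_sub (pot_int hμ k) (call_int hμ k)]
  have : ∀ x : ℝ, max (k - x) 0 - max (x - k) 0 = k - x := by
    intro x
    rcases le_total x k with h | h
    · rw [max_eq_left (by linarith), max_eq_right (by linarith)]; ring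
    · rw [max_eq_right (by linarith), max_eq_left (by linarith)]; ring
  simp only [this]
  rw [integral_sub (integrable_const _) hμ]
  simp [mul_comm]

lemma cdf_bot (μ : Measure ℝ) [IsFiniteMeasure μ] :
    Tendsto (fun t => μ.real (Iic t)) atBot (𝓝 0) := by
  have e1 : ∀ k, μ.real (Iic k) = ∫ x, (Iic k).indicator (fun _ => (1:ℝ)) x ∂μ := by
    intro k
    rw [integral_indicator measurableSet_Iic]; simp
  have : (0:ℝ) = ∫ x, 0 ∂μ := by simp
  simp only [e1]
  rw [this]
  refine tendsto_integral_filter_of_dominated_convergence (fun x => 1) ?_ ?_ (integrable_const _) ?_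
  · exact Eventually.of_forall fun y =>
      (measurable_const.indicator measurableSet_Iic).aestronglyMeasurable
  · refine Eventually.of_forall fun y => Eventually.of_forall fun x => ?_
    by_cases h : x ≤ y <;> simp [h]
  · refine Eventually.of_forall fun x => ?_
    refine tendsto_const_nhds.congr' ?_
    filter_upwards [eventually_lt_atBot x] with y hy
    simp [hy]

lemma st_pot {μ : Measure ℝ} [IsFiniteMeasure μ] (hμ : Integrable (fun x : ℝ => x) μ) :
    (st (pot_convex hμ)).measure = μ := by
  symm
  refine Measure.ext_of_Iic _ _ fun a => ?_
  have h : Tendsto (st (pot_convex hμ)) atBot (𝓝 0) := by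
    refine (cdf_bot μ).congr fun t => ?_
    rw [st_apply, pot_rd hμ]
  rw [StieltjesFunction.measure_Iic _ h, st_apply, pot_rd hμ, sub_zero]
  simp [Measure.real]

/-- A convex function vanishing at minus infinity, dominated appropriately, is a potential. -/
lemma exists_measure {ν : Measure ℝ} [IsFiniteMeasure ν] (hν : Integrable (fun x : ℝ => x) ν)
    {w v : ℝ → ℝ} (hw : ConvexOn ℝ univ w) (hv : ConvexOn ℝ univ v)
    (hsum : ∀ x, w x + v x = pot ν x) (hw0 : Tendsto w atBot (𝓝 0)) (hv0 : Tendsto v atBot (𝓝 0)) :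
    ∃ θ : Measure ℝ, θ ≤ ν ∧ ∀ k, pot θ k = w k := by
  have nn : ∀ {u : ℝ → ℝ}, ConvexOn ℝ univ u → Tendsto u atBot (𝓝 0) → ∀ x, 0 ≤ rd u x := by
    intro u hu h0 x
    by_contra! hneg
    -- u y - u x ≥ (y - x) * rd u x → ∞
    have h1 : ∀ y ≤ x, u x + (x - y) * (-rd u x) ≤ u y := by
      intro y hy
      have := rd_ftc hu y x
      have h2 : ∫ t in y..x, rd u t ≤ ∫ t in y..x, rd u x :=
        intervalIntegral.integral_mono_on hy (rd_mono hu).intervalIntegrable (by simp)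
          fun t ht => rd_mono hu ht.2
      rw [this] at h2
      simp at h2
      linarith
    have h3 : Tendsto (fun y => u x + (x - y) * (-rd u x)) atBot atTop := by
      refine tendsto_atTop_add_const_left _ _ ?_
      refine Tendsto.atTop_mul_const (by linarith) ?_
      exact tendsto_atTop_add_const_left _ x tendsto_neg_atBot_atTop
    have h4 : Tendsto u atBot atTop := by
      refine tendsto_atTop_mono' _ ?_ h3
      filter_upwards [eventually_le_atBot x] with y hy using h1 y hy
    exact not_tendsto_nhds_of_tendsto_atTop h4 _ h0
  have hst : st hw + st hv = st (pot_convex hν) := by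
    ext x
    simp only [StieltjesFunction.add_apply, st_apply]
    refine (rd_eq (φ := pot ν) ?_).symm
    have := (rd_has hw x).add (rd_has hv x)
    refine this.congr_of_eventuallyEq (Eventually.of_forall fun y => ?_) ?_
    · simp [hsum]
    · simp [hsum]
  have hle : (st hw).measure ≤ ν := by
    rw [← st_pot hν, ← hst, StieltjesFunction.measure_add]
    exact Measure.le_add_right le_rfl
  have : IsFiniteMeasure (st hw).measure := isFiniteMeasure_of_le ν hle
  have hθ : Integrable (fun x : ℝ => x) (st hw).measure := hν.mono_measure hle
  refine ⟨(st hw).measure, hle, fun k => ?_⟩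
  have hbot : Tendsto (st hw) atBot (𝓝 0) := by
    refine squeeze_zero (fun t => nn hw hw0 t) (fun t => ?_) (cdf_bot ν)
    have : st hw t + st hv t = st (pot_convex hν) t := by rw [← hst]; rfl
    rw [st_apply, st_apply, st_apply, pot_rd hν] at this
    rw [st_apply]
    linarith [nn hv hv0 t]
  have hrd : ∀ t, rd (pot (st hw).measure) t = rd w t := by
    intro t
    rw [pot_rd hθ, Measure.real, StieltjesFunction.measure_Iic _ hbot, sub_zero, st_apply,
      ENNReal.toReal_ofReal (nn hw hw0 t)]
  have hd : ∀ j, pot (st hw).measure k - pot (st hw).measure j = w k - w j := by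
    intro j
    rw [← rd_ftc (pot_convex hθ), ← rd_ftc hw]
    simp only [hrd]
  have h1 : Tendsto (fun j => pot (st hw).measure k - pot (st hw).measure j) atBot
    (𝓝 (pot (st hw).measure k - 0)) := tendsto_const_nhds.sub (pot_bot hθ)
  have h2 : Tendsto (fun j => w k - w j) atBot (𝓝 (w k - 0)) := tendsto_const_nhds.sub hw0
  simp only [hd] at h1
  simpa using tendsto_nhds_unique h1 h2

/-- mass and mean from squeezed potentials -/
lemma mass_mean {μ θ ρ : Measure ℝ} [IsFiniteMeasure μ] [IsFiniteMeasure θ] [IsFiniteMeasure ρ]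
    (hμ : Integrable (fun x : ℝ => x) μ) (hθ : Integrable (fun x : ℝ => x) θ)
    (hρ : Integrable (fun x : ℝ => x) ρ) (hm : μ.real univ = ρ.real univ)
    (hb : ∫ x, x ∂μ = ∫ x, x ∂ρ) (h1 : ∀ k, pot μ k ≤ pot θ k) (h2 : ∀ k, pot θ k ≤ pot ρ k) :
    μ.real univ = θ.real univ ∧ ∫ x, x ∂μ = ∫ x, x ∂θ := by
  have hT : Tendsto (fun k => pot θ k - (k * μ.real univ - ∫ x, x ∂μ)) atTop (𝓝 0) := by
    refine tendsto_of_tendsto_of_tendsto_of_le_of_le (call_top hμ) (call_top hρ) ?_ ?_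
    · intro k
      have := pot_call hμ k
      have := h1 k
      simp only; linarith
    · intro k
      have := pot_call hρ k
      have := h2 k
      simp only; rw [hm, hb]; linarith
  have hT2 : Tendsto (fun k => k * (θ.real univ - μ.real univ)) atTop
      (𝓝 (0 - 0 + (∫ x, x ∂θ - ∫ x, x ∂μ))) := by
    refine ((hT.sub (call_top hθ)).add_const _).congr fun k => ?_
    have := pot_call hθ k
    linarith
  have hz : θ.real univ - μ.real univ = 0 := by
    by_contra hne
    rcases lt_or_gt_of_ne hne with h | h
    · exact not_tendsto_nhds_of_tendsto_atBot (tendsto_id.atTop_mul_const_of_neg h) _ hT2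
    · exact not_tendsto_nhds_of_tendsto_atTop (tendsto_id.atTop_mul_const h) _ hT2
  rw [hz] at hT2
  simp only [mul_zero] at hT2
  have := tendsto_nhds_unique hT2 tendsto_const_nhds
  constructor <;> linarith

/-! ### Convex order from potentials -/

lemma hinge_right {φ : ℝ → ℝ} (h : ConvexOn ℝ univ φ) {x : ℝ} (hx : 0 ≤ x) :
    ∫⁻ k in Ioi 0, ENNReal.ofReal (x - k) ∂(st h).measure
      = ENNReal.ofReal (φ x - φ 0 - rd φ 0 * x) := by
  set κ := (st h).measure with hκ
  let s : Set (ℝ × ℝ) := {p | 0 < p.1 ∧ p.1 ≤ p.2 ∧ p.2 ≤ x}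
  have hs : MeasurableSet s :=
    (measurableSet_lt measurable_const measurable_fst).inter
      ((measurableSet_le measurable_fst measurable_snd).inter
        (measurableSet_le measurable_snd measurable_const))
  have e1 := Measure.prod_apply (μ := κ) (ν := (volume : Measure ℝ)) hs
  have e2 := Measure.prod_apply_symm (μ := κ) (ν := (volume : Measure ℝ)) hs
  rw [e1] at e2
  have f1 : ∀ k : ℝ, (volume : Measure ℝ) (Prod.mk k ⁻¹' s)
      = (Ioi 0).indicator (fun k => ENNReal.ofReal (x - k)) k := by
    intro k
    by_cases hk : 0 < k
    · have : Prod.mk k ⁻¹' s = Icc k x := by ext t; simp [s, hk]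
      rw [this]; simp [hk]
    · have : Prod.mk k ⁻¹' s = ∅ := by ext t; simp [s, hk]
      rw [this]; simp [hk]
  have f2 : ∀ t : ℝ, κ ((fun k => (k, t)) ⁻¹' s)
      = (Ioc 0 x).indicator (fun t => ENNReal.ofReal (rd φ t - rd φ 0)) t := by
    intro t
    by_cases ht : t ∈ Ioc 0 x
    · have : (fun k => (k, t)) ⁻¹' s = Ioc 0 t := by ext k; simp [s, ht.2]
      rw [this, indicator_of_mem ht, hκ, StieltjesFunction.measure_Ioc]
      rfl
    · have : (fun k => (k, t)) ⁻¹' s = ∅ := by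
        ext k
        simp only [s, mem_preimage, mem_ofPred_eq, mem_empty_iff_false, iff_false]
        rintro ⟨a, b, c⟩
        exact ht ⟨by linarith, c⟩
      rw [this, indicator_of_notMem ht]; simp
  simp only [f1, f2] at e2
  rw [lintegral_indicator measurableSet_Ioi, lintegral_indicator measurableSet_Ioc] at e2
  rw [e2]
  have hi : IntervalIntegrable (fun t => rd φ t - rd φ 0) volume 0 x :=
    (rd_mono h).intervalIntegrable.sub (by simp)
  rw [← ofReal_integral_eq_lintegral_ofReal]
  · rw [← intervalIntegral.integral_of_le hx, intervalIntegral.integral_sub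
      (rd_mono h).intervalIntegrable (by simp), rd_ftc h]
    simp [mul_comm]
  · exact (intervalIntegrable_iff_integrableOn_Ioc_of_le hx).mp hi
  · refine (ae_restrict_iff' measurableSet_Ioc).mpr (Eventually.of_forall fun t ht => ?_)
    exact sub_nonneg.mpr (rd_mono h ht.1.le)

lemma hinge_left {φ : ℝ → ℝ} (h : ConvexOn ℝ univ φ) {x : ℝ} (hx : x ≤ 0) :
    ∫⁻ k in Iic 0, ENNReal.ofReal (k - x) ∂(st h).measure
      = ENNReal.ofReal (φ x - φ 0 - rd φ 0 * x) := by
  set κ := (st h).measure with hκ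
  let s : Set (ℝ × ℝ) := {p | p.1 ≤ 0 ∧ p.2 < p.1 ∧ x < p.2}
  have hs : MeasurableSet s :=
    (measurableSet_le measurable_fst measurable_const).inter
      ((measurableSet_lt measurable_snd measurable_fst).inter
        (measurableSet_lt measurable_const measurable_snd))
  have e1 := Measure.prod_apply (μ := κ) (ν := (volume : Measure ℝ)) hs
  have e2 := Measure.prod_apply_symm (μ := κ) (ν := (volume : Measure ℝ)) hs
  rw [e1] at e2
  have f1 : ∀ k : ℝ, (volume : Measure ℝ) (Prod.mk k ⁻¹' s)
      = (Iic 0).indicator (fun k => ENNReal.ofReal (k - x)) k := by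
    intro k
    by_cases hk : k ≤ 0
    · have : Prod.mk k ⁻¹' s = Ioo x k := by ext t; simp [s, hk, and_comm]
      rw [this]; simp [hk]
    · have : Prod.mk k ⁻¹' s = ∅ := by ext t; simp [s, hk]
      rw [this]; simp [hk]
  have f2 : ∀ t : ℝ, κ ((fun k => (k, t)) ⁻¹' s)
      = (Ioc x 0).indicator (fun t => ENNReal.ofReal (rd φ 0 - rd φ t)) t := by
    intro t
    by_cases ht : t ∈ Ioc x 0
    · have : (fun k => (k, t)) ⁻¹' s = Ioc t 0 := by ext k; simp [s, ht.1, and_comm]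
      rw [this, indicator_of_mem ht, hκ, StieltjesFunction.measure_Ioc]
      rfl
    · have : (fun k => (k, t)) ⁻¹' s = ∅ := by
        ext k
        simp only [s, mem_preimage, mem_ofPred_eq, mem_empty_iff_false, iff_false]
        rintro ⟨a, b, c⟩
        exact ht ⟨c, by linarith⟩
      rw [this, indicator_of_notMem ht]; simp
  simp only [f1, f2] at e2
  rw [lintegral_indicator measurableSet_Iic, lintegral_indicator measurableSet_Ioc] at e2
  rw [e2]
  have hi : IntervalIntegrable (fun t => rd φ 0 - rd φ t) volume x 0 :=
    IntervalIntegrable.sub (by simp) (rd_mono h).intervalIntegrable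
  rw [← ofReal_integral_eq_lintegral_ofReal]
  · rw [← intervalIntegral.integral_of_le hx, intervalIntegral.integral_sub
      (by simp) (rd_mono h).intervalIntegrable, rd_ftc h]
    simp only [intervalIntegral.integral_const, smul_eq_mul]
    congr 1; ring
  · exact (intervalIntegrable_iff_integrableOn_Ioc_of_le hx).mp hi
  · refine (ae_restrict_iff' measurableSet_Ioc).mpr (Eventually.of_forall fun t ht => ?_)
    exact sub_nonneg.mpr (rd_mono h ht.2)

lemma hinge {φ : ℝ → ℝ} (h : ConvexOn ℝ univ φ) (x : ℝ) :
    ENNReal.ofReal (φ x - φ 0 - rd φ 0 * x) =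
    ∫⁻ k in Ioi 0, ENNReal.ofReal (x - k) ∂(st h).measure
      + ∫⁻ k in Iic 0, ENNReal.ofReal (k - x) ∂(st h).measure := by
  rcases le_total 0 x with hx | hx
  · rw [hinge_right h hx]
    have : ∫⁻ k in Iic 0, ENNReal.ofReal (k - x) ∂(st h).measure = 0 := by
      rw [setLIntegral_congr_fun measurableSet_Iic (g := fun _ => 0)]
      · simp
      · intro k hk
        have hk : k ≤ 0 := hk
        simp only [ENNReal.ofReal_eq_zero]
        linarith
    rw [this, add_zero]
  · rw [hinge_left h hx]
    have : ∫⁻ k in Ioi 0, ENNReal.ofReal (x - k) ∂(st h).measure = 0 := by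
      rw [setLIntegral_congr_fun measurableSet_Ioi (g := fun _ => 0)]
      · simp
      · intro k hk
        have hk : 0 < k := hk
        simp only [ENNReal.ofReal_eq_zero]
        linarith
    rw [this, zero_add]

lemma hinge_nonneg {φ : ℝ → ℝ} (h : ConvexOn ℝ univ φ) (x : ℝ) :
    0 ≤ φ x - φ 0 - rd φ 0 * x := by
  have e := rd_ftc h 0 x
  rcases le_total 0 x with hx | hx
  · have : ∫ t in (0:ℝ)..x, rd φ 0 ≤ ∫ t in (0:ℝ)..x, rd φ t :=
      intervalIntegral.integral_mono_on hx (by simp) (rd_mono h).intervalIntegrable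
        fun t ht => rd_mono h ht.1
    rw [e] at this
    simp at this
    linarith
  · have e := rd_ftc h x 0
    have : ∫ t in x..(0:ℝ), rd φ t ≤ ∫ t in x..(0:ℝ), rd φ 0 :=
      intervalIntegral.integral_mono_on hx (rd_mono h).intervalIntegrable (by simp)
        fun t ht => rd_mono h ht.2
    rw [e] at this
    simp at this
    linarith

lemma ofReal_max (a : ℝ) : ENNReal.ofReal a = ENNReal.ofReal (max a 0) := by
  simp

lemma convexOrder_of_pot {μ θ : Measure ℝ} [IsFiniteMeasure μ] [IsFiniteMeasure θ]
    (hμ : Integrable (fun x : ℝ => x) μ) (hθ : Integrable (fun x : ℝ => x) θ)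
    (hm : μ.real univ = θ.real univ) (hb : ∫ x, x ∂μ = ∫ x, x ∂θ)
    (hp : ∀ k, pot μ k ≤ pot θ k) : ConvexOrder μ θ := by
  intro φ h iμ iθ
  have hcall : ∀ k, call μ k ≤ call θ k := by
    intro k
    have e1 := pot_call hμ k
    have e2 := pot_call hθ k
    rw [hm, hb] at e1
    linarith [hp k]
  have l1 : ∀ k, ∫⁻ x, ENNReal.ofReal (x - k) ∂μ ≤ ∫⁻ x, ENNReal.ofReal (x - k) ∂θ := by
    intro k
    simp only [fun x : ℝ => ofReal_max (x - k)]
    rw [← ofReal_integral_eq_lintegral_ofReal (call_int hμ k)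
      (Eventually.of_forall fun _ => le_max_right _ _),
      ← ofReal_integral_eq_lintegral_ofReal (call_int hθ k)
      (Eventually.of_forall fun _ => le_max_right _ _)]
    exact ENNReal.ofReal_le_ofReal (hcall k)
  have l2 : ∀ k, ∫⁻ x, ENNReal.ofReal (k - x) ∂μ ≤ ∫⁻ x, ENNReal.ofReal (k - x) ∂θ := by
    intro k
    simp only [fun x : ℝ => ofReal_max (k - x)]
    rw [← ofReal_integral_eq_lintegral_ofReal (pot_int hμ k)
      (Eventually.of_forall fun _ => le_max_right _ _),
      ← ofReal_integral_eq_lintegral_ofReal (pot_int hθ k)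
      (Eventually.of_forall fun _ => le_max_right _ _)]
    exact ENNReal.ofReal_le_ofReal (hp k)
  let ψ : ℝ → ℝ := fun x => φ x - φ 0 - rd φ 0 * x
  have hψ : ∀ x, 0 ≤ ψ x := hinge_nonneg h
  have rep : ∀ (ρ : Measure ℝ) [IsFiniteMeasure ρ], ∫⁻ x, ENNReal.ofReal (ψ x) ∂ρ =
      ∫⁻ k in Ioi 0, ∫⁻ x, ENNReal.ofReal (x - k) ∂ρ ∂(st h).measure
      + ∫⁻ k in Iic 0, ∫⁻ x, ENNReal.ofReal (k - x) ∂ρ ∂(st h).measure := by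
    intro ρ _
    simp only [ψ, hinge h]
    have hmeas : Measurable fun x : ℝ => ∫⁻ k in Ioi 0, ENNReal.ofReal (x - k) ∂(st h).measure :=
      Measurable.lintegral_prod_right' (f := fun p : ℝ × ℝ => ENNReal.ofReal (p.1 - p.2))
        (by fun_prop)
    have s1 := lintegral_lintegral_swap (μ := ρ) (ν := (st h).measure.restrict (Ioi 0))
      (f := fun x k => ENNReal.ofReal (x - k)) (by fun_prop)
    have s2 := lintegral_lintegral_swap (μ := ρ) (ν := (st h).measure.restrict (Iic 0))
      (f := fun x k => ENNReal.ofReal (k - x)) (by fun_prop)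
    rw [lintegral_add_left hmeas, s1, s2]
  have main : ∫⁻ x, ENNReal.ofReal (ψ x) ∂μ ≤ ∫⁻ x, ENNReal.ofReal (ψ x) ∂θ := by
    rw [rep μ, rep θ]
    exact add_le_add (lintegral_mono fun k => l1 k) (lintegral_mono fun k => l2 k)
  have iψ : ∀ (ρ : Measure ℝ) [IsFiniteMeasure ρ], Integrable φ ρ → Integrable (fun x : ℝ => x) ρ →
      Integrable ψ ρ := fun ρ _ h1 h2 => (h1.sub (integrable_const _)).sub (h2.const_mul _)
  have ev : ∀ (ρ : Measure ℝ) [IsFiniteMeasure ρ], Integrable φ ρ → Integrable (fun x : ℝ => x) ρ →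
      ∫ x, φ x ∂ρ = ∫ x, ψ x ∂ρ + ρ.real univ * φ 0 + rd φ 0 * ∫ x, x ∂ρ := by
    intro ρ _ h1 h2
    have e : ∫ x, ψ x ∂ρ = ∫ x, φ x ∂ρ - ∫ x, φ 0 ∂ρ - ∫ x, rd φ 0 * x ∂ρ := by
      rw [← integral_sub h1 (integrable_const _), ← integral_sub _ (h2.const_mul _)]
      exact h1.sub (integrable_const _)
    rw [e, integral_const_mul]
    simp
    ring
  have fin : ∫ x, ψ x ∂μ ≤ ∫ x, ψ x ∂θ := by
    rw [← ofReal_integral_eq_lintegral_ofReal (iψ μ iμ hμ) (Eventually.of_forall hψ),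
      ← ofReal_integral_eq_lintegral_ofReal (iψ θ iθ hθ) (Eventually.of_forall hψ)] at main
    exact (ENNReal.ofReal_le_ofReal_iff (integral_nonneg hψ)).mp main
  rw [ev μ iμ hμ, ev θ iθ hθ, hm, hb]
  linarith

/-! ### Potential of the shadow -/

lemma order_facts {η S : Measure ℝ} [IsFiniteMeasure η] [IsFiniteMeasure S]
    (hη : Integrable (fun x : ℝ => x) η) (hS : Integrable (fun x : ℝ => x) S)
    (h : ConvexOrder η S) :
    η.real univ = S.real univ ∧ ∫ x, x ∂η = ∫ x, x ∂S ∧ ∀ k, pot η k ≤ pot S k := by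
  have a1 := h (fun _ => 1) (convexOn_const _ convex_univ) (integrable_const _) (integrable_const _)
  have a2 := h (fun _ => -1) (convexOn_const _ convex_univ) (integrable_const _)
    (integrable_const _)
  have a3 := h (fun x => x) (convexOn_id convex_univ) hη hS
  have a4 := h (fun x => -x) (concaveOn_id convex_univ).neg hη.neg hS.neg
  rw [integral_neg, integral_neg] at a4
  simp only [integral_const, smul_eq_mul] at a1 a2
  refine ⟨by linarith, by linarith, fun k => ?_⟩
  exact h _ (put_convex' k) (pot_int hη k) (pot_int hS k)

lemma shadow_pot {η ν S : Measure ℝ} [IsFiniteMeasure η] [IsFiniteMeasure ν] [IsFiniteMeasure S]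
    (hη : Integrable (fun x : ℝ => x) η) (hν : Integrable (fun x : ℝ => x) ν)
    (hS : Integrable (fun x : ℝ => x) S) (h : IsShadow η ν S) :
    (∀ k, pot η k ≤ pot ν k) ∧
      ∀ k, pot ν k - pot S k = env (fun x => pot ν x - pot η x) k := by
  obtain ⟨hc, hle, hmin⟩ := h
  obtain ⟨hm, hb, hp⟩ := order_facts hη hS hc
  have hr : Integrable (fun x : ℝ => x) (ν - S) := hν.mono_measure Measure.sub_le
  have hsum : ∀ k, pot ν k = pot (ν - S) k + pot S k := by
    intro k
    rw [← pot_add hr hS k, Measure.sub_add_cancel_of_le hle]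
  have hην : ∀ k, pot η k ≤ pot ν k := fun k => by
    linarith [hp k, hsum k, pot_nonneg (ν - S) k]
  have hf : ∀ k, 0 ≤ pot ν k - pot η k := fun k => sub_nonneg.mpr (hην k)
  let v : ℝ → ℝ := env (fun x => pot ν x - pot η x)
  let w : ℝ → ℝ := fun x => pot ν x - v x
  have hv : ConvexOn ℝ univ v := env_convex hf
  have hw : ConvexOn ℝ univ w := sub_env_convex (pot_convex hν) (pot_convex hη) hην
  have hvle : ∀ x, v x ≤ pot ν x - pot η x := env_le hf
  have hv0 : ∀ x, 0 ≤ v x := fun x => le_env cvx_zero hf x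
  have hvS : ∀ x, pot ν x - pot S x ≤ v x := by
    intro x
    have := le_env (f := fun x => pot ν x - pot η x) (pot_convex hr)
      (fun x => by linarith [hsum x, hp x]) x
    linarith [hsum x]
  have tv : Tendsto v atBot (𝓝 0) := by
    have t : Tendsto (fun x => pot ν x - pot η x) atBot (𝓝 (0 - 0)) :=
      (pot_bot hν).sub (pot_bot hη)
    rw [sub_zero] at t
    exact tendsto_of_tendsto_of_tendsto_of_le_of_le tendsto_const_nhds t hv0 hvle
  have tw : Tendsto w atBot (𝓝 0) := by
    have t : Tendsto w atBot (𝓝 (0 - 0)) := (pot_bot hν).sub tv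
    rwa [sub_zero] at t
  obtain ⟨θ, hθν, hθ⟩ := exists_measure hν hw hv (fun x => by simp [w]) tw tv
  have : IsFiniteMeasure θ := isFiniteMeasure_of_le ν hθν
  have hθi : Integrable (fun x : ℝ => x) θ := hν.mono_measure hθν
  have k1 : ∀ k, pot η k ≤ pot θ k := fun k => by
    rw [hθ]; simp only [w]; linarith [hvle k]
  have k2 : ∀ k, pot θ k ≤ pot S k := fun k => by
    rw [hθ]; simp only [w]; linarith [hvS k]
  obtain ⟨m1, m2⟩ := mass_mean hη hθi hS hm hb k1 k2
  have co := hmin θ (convexOrder_of_pot hη hθi m1 m2 k1) hθν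
  obtain ⟨-, -, hq⟩ := order_facts hS hθi co
  refine ⟨hην, fun k => ?_⟩
  have := hq k
  rw [hθ] at this
  simp only [w] at this
  exact le_antisymm (hvS k) (by linarith)

/-! ### Kantorovich distance and distribution functions -/

noncomputable def ker (x t : ℝ) : ℝ := (Iio x).indicator 1 t - (Iio 0).indicator 1 t

lemma ker_pos {x : ℝ} (hx : 0 ≤ x) (t : ℝ) : ker x t = (Ico 0 x).indicator 1 t := by
  unfold ker
  by_cases h1 : t < x <;> by_cases h2 : t < 0
  · simp [indicator, h1, h2]
  · simp [indicator, h1, h2, not_lt.mp h2]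
  · linarith
  · simp [indicator, h1, h2]

lemma ker_neg {x : ℝ} (hx : x ≤ 0) (t : ℝ) : ker x t = -(Ico x 0).indicator 1 t := by
  unfold ker
  by_cases h1 : t < x <;> by_cases h2 : t < 0
  · simp [indicator, h1, h2]
  · linarith
  · simp [indicator, h1, h2, not_lt.mp h1]
  · simp [indicator, h1, h2]

lemma ker_integral (ψ : ℝ → ℝ) (x : ℝ) : ∫ t, ψ t * ker x t = ∫ t in (0:ℝ)..x, ψ t := by
  rcases le_total 0 x with hx | hx
  · rw [intervalIntegral.integral_of_le hx, ← integral_Ico_eq_integral_Ioc,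
      ← integral_indicator measurableSet_Ico]
    congr 1; ext t
    rw [ker_pos hx]
    by_cases h : t ∈ Ico 0 x <;> simp [h]
  · rw [intervalIntegral.integral_of_ge hx, ← integral_Ico_eq_integral_Ioc,
      ← integral_indicator measurableSet_Ico, ← integral_neg]
    congr 1; ext t
    rw [ker_neg hx]
    by_cases h : t ∈ Ico x 0 <;> simp [h]

lemma ker_integrable (x : ℝ) : Integrable (ker x) := by
  have i : ∀ a b : ℝ, Integrable ((Ico a b).indicator (1 : ℝ → ℝ)) := fun a b =>
    (integrable_indicator_iff measurableSet_Ico).mpr (integrableOn_const (by simp))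
  rcases le_total 0 x with hx | hx
  · rw [funext (ker_pos hx)]; exact i _ _
  · rw [funext (ker_neg hx)]; exact (i _ _).neg

lemma ker_abs (x : ℝ) : ∫ t, ‖ker x t‖ = |x| := by
  rcases le_total 0 x with hx | hx
  · have : ∀ t, ‖ker x t‖ = 1 * ker x t := fun t => by
      rw [ker_pos hx]; by_cases h : t ∈ Ico 0 x <;> simp [h]
    simp only [this]
    rw [ker_integral (fun _ => 1)]; simp [abs_of_nonneg hx]
  · have : ∀ t, ‖ker x t‖ = (-1) * ker x t := fun t => by
      rw [ker_neg hx]; by_cases h : t ∈ Ico x 0 <;> simp [h]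
    simp only [this]
    rw [ker_integral (fun _ => -1)]; simp [abs_of_nonpos hx]

lemma ker_meas : Measurable (fun p : ℝ × ℝ => ker p.1 p.2) := by
  have h1 : MeasurableSet {p : ℝ × ℝ | p.2 < p.1} := measurableSet_lt measurable_snd measurable_fst
  have h2 : MeasurableSet {p : ℝ × ℝ | p.2 < 0} := measurableSet_lt measurable_snd measurable_const
  have : (fun p : ℝ × ℝ => ker p.1 p.2) = fun p =>
      {p : ℝ × ℝ | p.2 < p.1}.indicator 1 p - {p : ℝ × ℝ | p.2 < 0}.indicator 1 p := by
    ext p; simp [ker, indicator]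
  rw [this]
  exact (measurable_one.indicator h1).sub (measurable_one.indicator h2)

lemma ker_prod {μ : Measure ℝ} [IsFiniteMeasure μ] (hμ : Integrable (fun x : ℝ => x) μ) :
    Integrable (fun p : ℝ × ℝ => ker p.1 p.2) (μ.prod volume) := by
  rw [integrable_prod_iff ker_meas.aestronglyMeasurable]
  refine ⟨Eventually.of_forall ker_integrable, ?_⟩
  simp only [ker_abs]
  exact hμ.abs

noncomputable def tailf (μ : Measure ℝ) (t : ℝ) : ℝ := ∫ x, ker x t ∂μ

lemma tailf_int {μ : Measure ℝ} [IsFiniteMeasure μ] (hμ : Integrable (fun x : ℝ => x) μ) :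
    Integrable (tailf μ) := (ker_prod hμ).integral_prod_right

lemma tailf_eq (μ : Measure ℝ) [IsFiniteMeasure μ] (t : ℝ) :
    tailf μ t = μ.real univ - μ.real (Iic t) - μ.real univ * (Iio 0).indicator 1 t := by
  unfold tailf ker
  have e : (fun x : ℝ => (Iio x).indicator (1 : ℝ → ℝ) t) = (Ioi t).indicator 1 := by
    ext x; simp [indicator]
  have i : Integrable (fun x : ℝ => (Iio x).indicator (1 : ℝ → ℝ) t) μ := by
    rw [e]; exact (integrable_const (1:ℝ)).indicator measurableSet_Ioi
  rw [integral_sub i (integrable_const _), e, integral_indicator_one measurableSet_Ioi]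
  have := measureReal_add_measureReal_compl (μ := μ) (measurableSet_Iic (a := t))
  rw [compl_Iic] at this
  rw [integral_const, smul_eq_mul]
  linarith

lemma cdf_diff {μ κ : Measure ℝ} [IsFiniteMeasure μ] [IsFiniteMeasure κ]
    (hm : μ.real univ = κ.real univ) (t : ℝ) :
    μ.real (Iic t) - κ.real (Iic t) = tailf κ t - tailf μ t := by
  rw [tailf_eq, tailf_eq, hm]; ring

lemma prim_integral {μ : Measure ℝ} [IsFiniteMeasure μ] (hμ : Integrable (fun x : ℝ => x) μ)
    {ψ : ℝ → ℝ} (hψ : Measurable ψ) (hb : ∀ t, |ψ t| ≤ 1) :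
    ∫ x, (∫ t in (0:ℝ)..x, ψ t) ∂μ = ∫ t, ψ t * tailf μ t := by
  have hi : Integrable (fun p : ℝ × ℝ => ψ p.2 * ker p.1 p.2) (μ.prod volume) :=
    (ker_prod hμ).bdd_mul (c := 1) (hψ.comp measurable_snd).aestronglyMeasurable
      (Eventually.of_forall fun p => hb p.2)
  have := integral_integral_swap (f := fun x t => ψ t * ker x t) hi
  simp only [ker_integral, integral_const_mul] at this
  exact this

lemma lip_int {μ : Measure ℝ} [IsFiniteMeasure μ] (hμ : Integrable (fun x : ℝ => x) μ)
    {f : ℝ → ℝ} (hf : LipschitzWith 1 f) : Integrable f μ := by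
  refine Integrable.mono' ((integrable_const |f 0|).add hμ.abs)
    hf.continuous.aestronglyMeasurable (Eventually.of_forall fun x => ?_)
  have := hf.dist_le_mul x 0
  simp [Real.dist_eq] at this
  simp only [Real.norm_eq_abs, Pi.add_apply]
  have h2 := abs_sub_abs_le_abs_sub (f x) (f 0)
  linarith

lemma lip_integral {μ : Measure ℝ} [IsFiniteMeasure μ] (hμ : Integrable (fun x : ℝ => x) μ)
    {f : ℝ → ℝ} (hf : LipschitzWith 1 f) :
    ∫ x, f x ∂μ = (∫ t, deriv f t * tailf μ t) + μ.real univ * f 0 := by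
  have hd : ∀ t, |deriv f t| ≤ 1 := fun t => by
    simpa using norm_deriv_le_of_lipschitz (x₀ := t) hf
  have e : ∀ x, ∫ t in (0:ℝ)..x, deriv f t = f x - f 0 := fun x =>
    (hf.lipschitzOnWith.absolutelyContinuousOnInterval).integral_deriv_eq_sub
  rw [← prim_integral hμ (measurable_deriv f) hd]
  simp only [e]
  rw [integral_sub (lip_int hμ hf) (integrable_const _)]
  simp

lemma lip_upper {μ κ : Measure ℝ} [IsFiniteMeasure μ] [IsFiniteMeasure κ]
    (hμ : Integrable (fun x : ℝ => x) μ) (hκ : Integrable (fun x : ℝ => x) κ)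
    (hm : μ.real univ = κ.real univ) {f : ℝ → ℝ} (hf : LipschitzWith 1 f) :
    |∫ x, f x ∂μ - ∫ x, f x ∂κ| ≤ ∫ t, |μ.real (Iic t) - κ.real (Iic t)| := by
  have hd : ∀ t, |deriv f t| ≤ 1 := fun t => by
    simpa using norm_deriv_le_of_lipschitz (x₀ := t) hf
  have hi : ∀ {ρ : Measure ℝ} [IsFiniteMeasure ρ], Integrable (fun x : ℝ => x) ρ →
      Integrable (fun t => deriv f t * tailf ρ t) := fun h =>
    (tailf_int h).bdd_mul (c := 1) (measurable_deriv f).aestronglyMeasurable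
      (Eventually.of_forall hd)
  rw [lip_integral hμ hf, lip_integral hκ hf, hm, add_sub_add_right_eq_sub,
    ← integral_sub (hi hμ) (hi hκ)]
  refine (abs_integral_le_integral_abs).trans (integral_mono ((hi hμ).sub (hi hκ)).abs ?_ ?_)
  · simp only [cdf_diff hm]
    exact ((tailf_int hκ).sub (tailf_int hμ)).abs
  · intro t
    simp only [cdf_diff hm, ← mul_sub, abs_mul]
    rw [abs_sub_comm (tailf κ t)]
    exact mul_le_of_le_one_left (abs_nonneg _) (hd t)

lemma W1_le {μ κ : Measure ℝ} [IsFiniteMeasure μ] [IsFiniteMeasure κ]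
    (hμ : Integrable (fun x : ℝ => x) μ) (hκ : Integrable (fun x : ℝ => x) κ)
    (hm : μ.real univ = κ.real univ) :
    W1 μ κ ≤ ∫ t, |μ.real (Iic t) - κ.real (Iic t)| := by
  have : Nonempty {f : ℝ → ℝ // LipschitzWith 1 f} := ⟨⟨fun x => x, LipschitzWith.id⟩⟩
  exact ciSup_le fun f => lip_upper hμ hκ hm f.2

lemma le_W1 {μ κ : Measure ℝ} [IsFiniteMeasure μ] [IsFiniteMeasure κ]
    (hμ : Integrable (fun x : ℝ => x) μ) (hκ : Integrable (fun x : ℝ => x) κ)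
    (hm : μ.real univ = κ.real univ) :
    ∫ t, |μ.real (Iic t) - κ.real (Iic t)| ≤ W1 μ κ := by
  let s : Set ℝ := {t | κ.real (Iic t) ≤ μ.real (Iic t)}
  have mF : ∀ (ρ : Measure ℝ) [IsFiniteMeasure ρ], Measurable fun t => ρ.real (Iic t) :=
    fun ρ _ => Monotone.measurable fun a b h => measureReal_mono (Iic_subset_Iic.mpr h)
  have hs : MeasurableSet s := measurableSet_le (mF κ) (mF μ)
  classical
  let ψ : ℝ → ℝ := fun t => if t ∈ s then -1 else 1
  have mψ : Measurable ψ := Measurable.ite hs measurable_const measurable_const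
  have bψ : ∀ t, |ψ t| ≤ 1 := fun t => by simp only [ψ]; split_ifs <;> simp
  have iψ : ∀ a b, IntervalIntegrable ψ volume a b := fun a b => by
    refine (intervalIntegrable_const (c := (1:ℝ))).mono_fun mψ.aestronglyMeasurable ?_
    exact Eventually.of_forall fun t => by simpa using bψ t
  let Φ : ℝ → ℝ := fun x => ∫ t in (0:ℝ)..x, ψ t
  have hΦ : LipschitzWith 1 Φ := by
    refine LipschitzWith.of_dist_le_mul fun x y => ?_
    simp only [Real.dist_eq, Φ]
    rw [intervalIntegral.integral_interval_sub_left (iψ _ _) (iψ _ _)]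
    have := intervalIntegral.norm_integral_le_of_norm_le_const (a := y) (b := x) (f := ψ) (C := 1)
      (fun t _ => bψ t)
    simpa using this
  have hi : ∀ {ρ : Measure ℝ} [IsFiniteMeasure ρ], Integrable (fun x : ℝ => x) ρ →
      Integrable (fun t => ψ t * tailf ρ t) := fun h =>
    (tailf_int h).bdd_mul (c := 1) mψ.aestronglyMeasurable (Eventually.of_forall bψ)
  have e : ∫ t, |μ.real (Iic t) - κ.real (Iic t)| = ∫ x, Φ x ∂μ - ∫ x, Φ x ∂κ := by
    simp only [Φ]
    rw [prim_integral hμ mψ bψ, prim_integral hκ mψ bψ, ← integral_sub (hi hμ) (hi hκ)]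
    congr 1; ext t
    rw [← mul_sub, ← neg_sub (tailf κ t), ← cdf_diff hm]
    simp only [ψ]
    split_ifs with h
    · have h : κ.real (Iic t) ≤ μ.real (Iic t) := h
      rw [abs_of_nonneg (by linarith)]; ring
    · have h : ¬ κ.real (Iic t) ≤ μ.real (Iic t) := h
      rw [abs_of_neg (by linarith)]; ring
  rw [e]
  refine (le_abs_self _).trans ?_
  have bdd : BddAbove (range fun f : {f : ℝ → ℝ // LipschitzWith 1 f} =>
      |∫ x, (f : ℝ → ℝ) x ∂μ - ∫ x, (f : ℝ → ℝ) x ∂κ|) := by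
    refine ⟨∫ t, |μ.real (Iic t) - κ.real (Iic t)|, ?_⟩
    rintro _ ⟨f, rfl⟩
    exact lip_upper hμ hκ hm f.2
  exact le_ciSup bdd ⟨Φ, hΦ⟩

/-! ### The main estimate -/

lemma env_bound {f h : ℝ → ℝ} {C : ℝ} (hf : ∀ x, 0 ≤ f x) (hh : ∀ x, 0 ≤ h x)
    (hm : Monotone (fun x => h x - f x)) (h0 : ∀ x, f x ≤ h x) (hC : ∀ x, h x - f x ≤ C) :
    (∀ x, rd (env f) x ≤ rd (env h) x) ∧
      ∀ x y, ∫ t in x..y, (rd (env h) t - rd (env f) t) ≤ C := by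
  have cf := env_convex hf
  have ch := env_convex hh
  refine ⟨fun x => ?_, fun x y => ?_⟩
  · have hd := (rd_has ch x).sub (rd_has cf x)
    have hmono : Monotone (fun x => env h x - env f x) := env_swap hf hh hm
    have := (hmono.monotoneOn (Ioi x)).derivWithin_nonneg (x := x)
    have e : derivWithin (fun x => env h x - env f x) (Ioi x) x = _ :=
      hd.derivWithin (uniqueDiffWithinAt_Ioi x)
    rw [e] at this
    linarith
  · rw [intervalIntegral.integral_sub (rd_mono ch).intervalIntegrable
      (rd_mono cf).intervalIntegrable, rd_ftc ch, rd_ftc cf]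
    have u1 : env f x ≤ env h x := le_env cf (fun z => (env_le hf z).trans (h0 z)) x
    have u2 : env h y - C ≤ env f y :=
      le_env (ψ := fun z => env h z - C) (ch.sub (concaveOn_const _ convex_univ))
        (fun z => by linarith [env_le hh z, hC z]) y
    linarith

lemma cdf_shadow {ν S : Measure ℝ} [IsFiniteMeasure ν] [IsFiniteMeasure S]
    (hν : Integrable (fun x : ℝ => x) ν) (hS : Integrable (fun x : ℝ => x) S)
    {v : ℝ → ℝ} (hv : ConvexOn ℝ univ v) (h : ∀ k, pot ν k - pot S k = v k) (t : ℝ) :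
    ν.real (Iic t) - S.real (Iic t) = rd v t := by
  have hd := (rd_has (pot_convex hν) t).sub (rd_has (pot_convex hS) t)
  have e : (pot ν - pot S) = v := funext h
  rw [e, pot_rd hν, pot_rd hS] at hd
  exact (rd_eq hd).symm

lemma cdf_diff_int {μ κ : Measure ℝ} [IsFiniteMeasure μ] [IsFiniteMeasure κ]
    (hμ : Integrable (fun x : ℝ => x) μ) (hκ : Integrable (fun x : ℝ => x) κ)
    (hm : μ.real univ = κ.real univ) :
    Integrable (fun t => μ.real (Iic t) - κ.real (Iic t)) := by
  simp only [cdf_diff hm]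
  exact (tailf_int hκ).sub (tailf_int hμ)

lemma pot_diff {μ κ : Measure ℝ} [IsFiniteMeasure μ] [IsFiniteMeasure κ]
    (hμ : Integrable (fun x : ℝ => x) μ) (hκ : Integrable (fun x : ℝ => x) κ)
    (hm : μ.real univ = κ.real univ) (x : ℝ) :
    ∫ t in Iic x, (μ.real (Iic t) - κ.real (Iic t)) = pot μ x - pot κ x := by
  have t1 := intervalIntegral_tendsto_integral_Iic (a := fun y : ℝ => y) (l := atBot) x
    (cdf_diff_int hμ hκ hm).integrableOn tendsto_id
  have e : ∀ y, ∫ t in y..x, (μ.real (Iic t) - κ.real (Iic t))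
      = (pot μ x - pot κ x) - (pot μ y - pot κ y) := by
    intro y
    have a := rd_ftc (pot_convex hμ) y x
    have b := rd_ftc (pot_convex hκ) y x
    have c := intervalIntegral.integral_sub (μ := volume) (a := y) (b := x)
      (rd_mono (pot_convex hμ)).intervalIntegrable
      (rd_mono (pot_convex hκ)).intervalIntegrable
    simp only [pot_rd hμ, pot_rd hκ] at a b c
    rw [c, a, b]; ring
  simp only [e] at t1
  have t2 : Tendsto (fun y => (pot μ x - pot κ x) - (pot μ y - pot κ y)) atBot
      (𝓝 ((pot μ x - pot κ x) - (0 - 0))) :=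
    tendsto_const_nhds.sub ((pot_bot hμ).sub (pot_bot hκ))
  rw [sub_zero, sub_zero] at t2
  exact tendsto_nhds_unique t1 t2

lemma prim_facts {p : ℝ → ℝ} (hp : Integrable p) (h0 : ∀ t, 0 ≤ p t) :
    Monotone (fun x => ∫ t in Iic x, p t) ∧ (∀ x, 0 ≤ ∫ t in Iic x, p t) ∧
      ∀ x, ∫ t in Iic x, p t ≤ ∫ t, p t :=
  ⟨fun _ _ h => setIntegral_mono_set hp.integrableOn (Eventually.of_forall h0)
      (Iic_subset_Iic.mpr h).eventuallyLE,
    fun _ => integral_nonneg h0,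
    fun _ => setIntegral_le_integral hp (Eventually.of_forall h0)⟩

lemma main_bound {η η' ν S S' : Measure ℝ} [IsFiniteMeasure η] [IsFiniteMeasure η']
    [IsFiniteMeasure ν] [IsFiniteMeasure S] [IsFiniteMeasure S']
    (hη : Integrable (fun x : ℝ => x) η) (hη' : Integrable (fun x : ℝ => x) η')
    (hν : Integrable (fun x : ℝ => x) ν) (hS : Integrable (fun x : ℝ => x) S)
    (hS' : Integrable (fun x : ℝ => x) S') (hm : η.real univ = η'.real univ)
    (hmS : S.real univ = S'.real univ) (h : IsShadow η ν S) (h' : IsShadow η' ν S') :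
    ∫ t, |S.real (Iic t) - S'.real (Iic t)| ≤ ∫ t, |η.real (Iic t) - η'.real (Iic t)| := by
  obtain ⟨hle, hpS⟩ := shadow_pot hη hν hS h
  obtain ⟨hle', hpS'⟩ := shadow_pot hη' hν hS' h'
  set f : ℝ → ℝ := fun x => pot ν x - pot η x with hf
  set g : ℝ → ℝ := fun x => pot ν x - pot η' x with hg
  have f0 : ∀ x, 0 ≤ f x := fun x => sub_nonneg.mpr (hle x)
  have g0 : ∀ x, 0 ≤ g x := fun x => sub_nonneg.mpr (hle' x)
  let D : ℝ → ℝ := fun t => η.real (Iic t) - η'.real (Iic t)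
  have iD : Integrable D := cdf_diff_int hη hη' hm
  let P : ℝ → ℝ := fun t => max (D t) 0
  let N : ℝ → ℝ := fun t => max (-D t) 0
  have iP : Integrable P := iD.pos_part
  have iN : Integrable N := iD.neg_part
  have hPN : ∀ t, P t - N t = D t := fun t => by
    simp only [P, N]
    rcases le_total 0 (D t) with q | q
    · rw [max_eq_left q, max_eq_right (by linarith)]; ring
    · rw [max_eq_right q, max_eq_left (by linarith)]; ring
  have hPN' : ∀ t, P t + N t = |D t| := fun t => by
    simp only [P, N]
    rcases le_total 0 (D t) with q | q
    · rw [max_eq_left q, max_eq_right (by linarith), abs_of_nonneg q]; ring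
    · rw [max_eq_right q, max_eq_left (by linarith), abs_of_nonpos q]; ring
  obtain ⟨a1, a2, a3⟩ := prim_facts iP (fun t => le_max_right _ _)
  obtain ⟨b1, b2, b3⟩ := prim_facts iN (fun t => le_max_right _ _)
  set a : ℝ → ℝ := fun x => ∫ t in Iic x, P t with ha
  set b : ℝ → ℝ := fun x => ∫ t in Iic x, N t with hb
  have hab : ∀ x, a x - b x = pot η x - pot η' x := by
    intro x
    rw [← pot_diff hη hη' hm, ha, hb]
    simp only
    rw [← integral_sub iP.integrableOn iN.integrableOn]
    simp only [hPN]
    rfl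
  let H : ℝ → ℝ := fun x => f x + a x
  have H0 : ∀ x, 0 ≤ H x := fun x => add_nonneg (f0 x) (a2 x)
  have eHf : ∀ x, H x - f x = a x := fun x => by simp [H]
  have eHg : ∀ x, H x - g x = b x := fun x => by
    simp only [H, hf, hg]; linarith [hab x]
  obtain ⟨p1, p2⟩ := env_bound (C := ∫ t, P t) f0 H0 (by simpa only [eHf] using a1)
    (fun x => by linarith [eHf x, a2 x]) (fun x => by rw [eHf]; exact a3 x)
  obtain ⟨q1, q2⟩ := env_bound (C := ∫ t, N t) g0 H0 (by simpa only [eHg] using b1)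
    (fun x => by linarith [eHg x, b2 x]) (fun x => by rw [eHg]; exact b3 x)
  have cS := cdf_shadow hν hS (env_convex f0) hpS
  have cS' := cdf_shadow hν hS' (env_convex g0) hpS'
  have iS := (cdf_diff_int hS hS' hmS).abs
  have tl := intervalIntegral_tendsto_integral (a := fun n : ℕ => -(n:ℝ)) (b := fun n : ℕ => (n:ℝ))
    (l := atTop) iS (tendsto_neg_atTop_atBot.comp tendsto_natCast_atTop_atTop)
    tendsto_natCast_atTop_atTop
  refine le_of_tendsto' tl fun n => ?_
  have ii : ∀ {u : ℝ → ℝ}, (∀ x, 0 ≤ u x) →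
      IntervalIntegrable (fun t => rd (env H) t - rd (env u) t) volume (-(n:ℝ)) n := fun hu =>
    (rd_mono (env_convex H0)).intervalIntegrable.sub (rd_mono (env_convex hu)).intervalIntegrable
  calc ∫ t in (-(n:ℝ))..n, |S.real (Iic t) - S'.real (Iic t)|
      ≤ ∫ t in (-(n:ℝ))..n,
          ((rd (env H) t - rd (env f) t) + (rd (env H) t - rd (env g) t)) := by
        refine intervalIntegral.integral_mono_on (by linarith [n.cast_nonneg (α := ℝ)])
          iS.intervalIntegrable ((ii f0).add (ii g0)) fun t _ => ?_
        rw [abs_le]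
        constructor <;> linarith [cS t, cS' t, p1 t, q1 t]
    _ ≤ (∫ t, P t) + ∫ t, N t := by
        rw [intervalIntegral.integral_add (ii f0) (ii g0)]
        exact add_le_add (p2 _ _) (q2 _ _)
    _ = ∫ t, |η.real (Iic t) - η'.real (Iic t)| := by
        rw [← integral_add iP iN]
        simp only [hPN']
        rfl

end ShadowAux
end ShadowAux

/-- The shadow projection is 1-Lipschitz for the Wasserstein-1 distance:
`W(S^ν(η), S^ν(η')) ≤ W(η, η')` for measures of equal mass with `η' ≤_c η`. -/
theorem shadow_lipschitz (η η' ν : Measure ℝ)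
    [IsFiniteMeasure η] [IsFiniteMeasure η'] [IsFiniteMeasure ν]
    (hη : Integrable (fun x : ℝ => x) η) (hη' : Integrable (fun x : ℝ => x) η')
    (hν : Integrable (fun x : ℝ => x) ν)
    (hmass : η Set.univ = η' Set.univ)
    (hc : ConvexOrder η' η)
    (h₁ : ConvexPlusOrder η ν) (h₂ : ConvexPlusOrder η' ν)
    (Sη Sη' : Measure ℝ) (hSη : IsShadow η ν Sη) (hSη' : IsShadow η' ν Sη') :
    W1 Sη Sη' ≤ W1 η η' := by
  have f1 : IsFiniteMeasure Sη := isFiniteMeasure_of_le ν hSη.2.1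
  have f2 : IsFiniteMeasure Sη' := isFiniteMeasure_of_le ν hSη'.2.1
  have i1 : Integrable (fun x : ℝ => x) Sη := hν.mono_measure hSη.2.1
  have i2 : Integrable (fun x : ℝ => x) Sη' := hν.mono_measure hSη'.2.1
  have hm : η.real Set.univ = η'.real Set.univ := by
    simp only [Measure.real, hmass]
  have m1 := (ShadowAux.order_facts hη i1 hSη.1).1
  have m2 := (ShadowAux.order_facts hη' i2 hSη'.1).1
  have hmS : Sη.real Set.univ = Sη'.real Set.univ := by rw [← m1, ← m2, hm]
  exact (ShadowAux.W1_le i1 i2 hmS).trans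
    ((ShadowAux.main_bound hη hη' hν i1 i2 hm hmS hSη hSη').trans (ShadowAux.le_W1 hη hη' hm))
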